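/- arXiv:1602.03567 — 2 statements merged into one kernel-verified Lean document; each statement's English description precedes it below -/
import Mathlib

section
/- Let k ≥ 1, q ≥ 1, and x ∈ A_k. If d > R·r_max^q then μ_k(B(x,d)) ≥ r_min^{q·s}, and if d ≥ R·r_max^q then μ_k(B̄(x,d)) ≥ r_min^{q·s}. -/
/-!
The measures satisfy the recursion `μ_{k+1}(S) = ∑ᵢ rᵢ^s μ_k(fᵢ⁻¹ S)` (`muk_succ`), and the bound
follows from it by induction on `k` with `q` general. If `x = fᵢ y` with `y ∈ A_k`, then `fᵢ` maps
the closed ball around `y` of radius `R r_max^q` into the one around `x` of radius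
`R r_max^(q+1)`, so keeping only the `i`-th summand costs a factor `rᵢ^s ≥ r_min^s` and lowers both
`k` and `q` by one. The induction stops in one of two cases. For `q = 0` the ball of radius
`R = diam E` around a point of `E` contains `E`, which has full measure (`one_le_muk`). For `k`
minimal the point `x` is a fixed point `pᵢ`, itself an atom of mass `rᵢ^s`. The result for open
balls follows because a strictly larger open ball contains the closed one.
-/

open MeasureTheory Metric Set

noncomputable section

/-- Composition of the maps of the IFS along a word (list of letters). -/
def fword {m : ℕ} {X : Type*} (f : Fin m → X → X) : List (Fin m) → X → X
  | [] => id
  | i :: w => f i ∘ fword f w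

/-- Product of the contraction ratios along a word. -/
def rword {m : ℕ} (r : Fin m → ℝ) (w : List (Fin m)) : ℝ := (w.map r).prod

/-- The point clouds: `cloud f p k` is the set `A_{k+1}` of the paper
(`cloud f p 0 = A₁` is the set of fixed points). -/
def cloud {m : ℕ} {X : Type*} (f : Fin m → X → X) (p : Fin m → X) : ℕ → Set X
  | 0 => Set.range p
  | k + 1 => ⋃ i, f i '' cloud f p k

/-- The discrete measure: `muk f p r s k` is the measure `μ_{k+1}` of the paper,
supported on `cloud f p k = A_{k+1}`. -/
def muk {m : ℕ} {X : Type*} [MeasurableSpace X] (f : Fin m → X → X) (p : Fin m → X)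
    (r : Fin m → ℝ) (s : ℝ) (k : ℕ) : Measure X :=
  ∑ w : Fin (k + 1) → Fin m,
    ENNReal.ofReal ((∏ j, r (w j)) ^ s) •
      Measure.dirac (fword f (List.ofFn w) (p (w (Fin.last k))))

/-- Splitting off the first letter of the words. -/
lemma muk_succ {m : ℕ} {X : Type*} [MeasurableSpace X] (f : Fin m → X → X)
    (hf : ∀ i, Measurable (f i)) (p : Fin m → X) (r : Fin m → ℝ) (hr : ∀ i, 0 < r i) (s : ℝ)
    (k : ℕ) (S : Set X) (hS : MeasurableSet S) :
    muk f p r s (k + 1) S = ∑ i, ENNReal.ofReal (r i ^ s) * muk f p r s k (f i ⁻¹' S) := by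
  simp only [muk, Measure.finsetSum_apply, Measure.smul_apply, smul_eq_mul, Finset.mul_sum]
  rw [← Fintype.sum_prod_type', ← (Fin.consEquiv (fun _ : Fin (k + 2) => Fin m)).sum_comp]
  refine Finset.sum_congr rfl fun ⟨i, w⟩ _ => ?_
  rw [Measure.dirac_apply' _ hS, Measure.dirac_apply' _ (hf i hS), ← mul_assoc,
    ← ENNReal.ofReal_mul (Real.rpow_nonneg (hr i).le _),
    ← Real.mul_rpow (hr i).le (Finset.prod_nonneg fun j _ => (hr _).le)]
  simp only [Fin.consEquiv_apply, Fin.prod_univ_succ (n := k + 1), Fin.cons_zero, Fin.cons_succ,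
    List.ofFn_succ (n := k + 1), fword, Function.comp, ← Fin.succ_last]
  rfl

lemma muk_zero {m : ℕ} {X : Type*} [MeasurableSpace X] (f : Fin m → X → X) (p : Fin m → X)
    (hp : ∀ i, f i (p i) = p i) (r : Fin m → ℝ) (s : ℝ) (S : Set X) :
    muk f p r s 0 S = ∑ i, ENNReal.ofReal (r i ^ s) * Measure.dirac (p i) S := by
  simp only [muk, Measure.finsetSum_apply, Measure.smul_apply, smul_eq_mul]
  rw [← (Equiv.funUnique (Fin 1) (Fin m)).symm.sum_comp]
  refine Finset.sum_congr rfl fun i _ => ?_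
  simp [fword, hp]

/-- A measurable set has full measure if it contains a set `E` that holds all fixed points and is
mapped into itself by every `fᵢ`. -/
lemma one_le_muk {m : ℕ} {X : Type*} [MeasurableSpace X] (f : Fin m → X → X)
    (hf : ∀ i, Measurable (f i)) (p : Fin m → X) (hp : ∀ i, f i (p i) = p i)
    (r : Fin m → ℝ) (hr : ∀ i, 0 < r i) (s : ℝ) (hsum : ∑ i, r i ^ s = 1)
    (E : Set X) (hE : ∀ i, ∀ x ∈ E, f i x ∈ E) (hpE : ∀ i, p i ∈ E) (k : ℕ) :
    ∀ S : Set X, MeasurableSet S → E ⊆ S → 1 ≤ muk f p r s k S := by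
  have hone : ∑ i, ENNReal.ofReal (r i ^ s) = 1 := by
    rw [← ENNReal.ofReal_sum_of_nonneg fun i _ => Real.rpow_nonneg (hr i).le _, hsum,
      ENNReal.ofReal_one]
  induction k with
  | zero =>
    intro S hS hES
    rw [muk_zero f p hp, ← hone]
    refine Finset.sum_le_sum fun i _ => ?_
    rw [Measure.dirac_apply_of_mem (hES (hpE i)), mul_one]
  | succ k ih =>
    intro S hS hES
    rw [muk_succ f hf p r hr s k S hS, ← hone]
    exact Finset.sum_le_sum fun i _ =>
      le_mul_of_one_le_right' (ih _ (hf i hS) fun x hx => hES (hE i x hx))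

/-- The fixed point of a contraction lies in every nonempty compact invariant set: a point of the
set nearest to the fixed point would otherwise have an image strictly nearer. -/
lemma fixedPoint_mem {X : Type*} [MetricSpace X] (g : X → X) (c : ℝ) (hc : c < 1)
    (hg : ∀ x y, dist (g x) (g y) = c * dist x y) (E : Set X) (hne : E.Nonempty)
    (hcpt : IsCompact E) (hE : ∀ x ∈ E, g x ∈ E) (p : X) (hp : g p = p) : p ∈ E := by
  obtain ⟨e, he, hmin⟩ := hcpt.exists_isMinOn hne
    (continuous_id.dist continuous_const : Continuous fun x : X => dist x p).continuousOn
  have h1 : dist e p ≤ dist (g e) p := hmin (hE e he)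
  have h2 : dist (g e) p = c * dist e p := by rw [← hg e p, hp]
  have h3 : dist e p = 0 := by nlinarith [dist_nonneg (x := e) (y := p)]
  rwa [← dist_eq_zero.1 h3]

lemma cloud_subset {m : ℕ} {X : Type*} (f : Fin m → X → X) (p : Fin m → X) (E : Set X)
    (hE : ∀ i, ∀ x ∈ E, f i x ∈ E) (hpE : ∀ i, p i ∈ E) (k : ℕ) : cloud f p k ⊆ E := by
  induction k with
  | zero => rintro _ ⟨i, rfl⟩; exact hpE i
  | succ k ih =>
    intro x hx
    obtain ⟨i, y, hy, rfl⟩ := mem_iUnion.1 hx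
    exact hE i y (ih hy)

theorem stmt7
    (n m : ℕ) (hn : 1 ≤ n) (hm : 2 ≤ m)
    (f : Fin m → EuclideanSpace ℝ (Fin n) → EuclideanSpace ℝ (Fin n))
    (r : Fin m → ℝ) (hr : ∀ i, r i ∈ Set.Ioo (0 : ℝ) 1)
    (hsim : ∀ i x y, dist (f i x) (f i y) = r i * dist x y)
    (E : Set (EuclideanSpace ℝ (Fin n)))
    (hEne : E.Nonempty) (hEcpt : IsCompact E)
    (hEinv : E = ⋃ i, f i '' E)
    (hssc : ∀ i j, i ≠ j → f i '' E ∩ f j '' E = ∅)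
    (s : ℝ) (hs : 0 < s) (hsum : ∑ i, r i ^ s = 1)
    (p : Fin m → EuclideanSpace ℝ (Fin n)) (hp : ∀ i, f i (p i) = p i)
    (rmin rmax : ℝ)
    (hrmin₁ : ∃ i, rmin = r i) (hrmin₂ : ∀ i, rmin ≤ r i)
    (hrmax₁ : ∃ i, rmax = r i) (hrmax₂ : ∀ i, r i ≤ rmax)
    (R : ℝ) (hR : R = Metric.diam E) :
    ∀ k q : ℕ, 1 ≤ q → ∀ x ∈ cloud f p k, ∀ d : ℝ,
      (R * rmax ^ q < d →
        ENNReal.ofReal (rmin ^ ((q : ℝ) * s)) ≤ muk f p r s k (Metric.ball x d)) ∧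
      (R * rmax ^ q ≤ d →
        ENNReal.ofReal (rmin ^ ((q : ℝ) * s)) ≤ muk f p r s k (Metric.closedBall x d)) := by
  have hr0 : ∀ i, 0 < r i := fun i => (hr i).1
  have hf : ∀ i, Measurable (f i) := fun i =>
    (LipschitzWith.of_dist_le_mul (K := ⟨r i, (hr0 i).le⟩)
      fun x y => (hsim i x y).le).continuous.measurable
  have hE : ∀ i, ∀ x ∈ E, f i x ∈ E := fun i x hx => by
    rw [hEinv]; exact mem_iUnion.2 ⟨i, x, hx, rfl⟩
  have hpE : ∀ i, p i ∈ E := fun i =>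
    fixedPoint_mem (f i) (r i) (hr i).2 (hsim i) E hEne hEcpt (hE i) (p i) (hp i)
  have hmin0 : 0 < rmin := by obtain ⟨i, rfl⟩ := hrmin₁; exact hr0 i
  have hmin1 : rmin < 1 := by obtain ⟨i, rfl⟩ := hrmin₁; exact (hr i).2
  have hmax0 : 0 < rmax := by obtain ⟨i, rfl⟩ := hrmax₁; exact hr0 i
  have hR0 : 0 ≤ R := hR ▸ diam_nonneg
  have hq0 : ∀ k, ∀ x ∈ cloud f p k, 1 ≤ muk f p r s k (closedBall x R) := by
    intro k x hx
    refine one_le_muk f hf p hp r hr0 s hsum E hE hpE k _ measurableSet_closedBall fun y hy => ?_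
    rw [mem_closedBall, hR]
    exact dist_le_diam_of_mem hEcpt.isBounded hy (cloud_subset f p E hE hpE k hx)
  have key : ∀ k q : ℕ, ∀ x ∈ cloud f p k,
      ENNReal.ofReal (rmin ^ ((q : ℝ) * s)) ≤ muk f p r s k (closedBall x (R * rmax ^ q)) := by
    intro k
    induction k with
    | zero =>
      rintro (_ | q) x hx
      · simpa using hq0 0 x hx
      · obtain ⟨i, rfl⟩ := hx
        have hmem : p i ∈ closedBall (p i) (R * rmax ^ (q + 1)) :=
          mem_closedBall_self (by positivity)
        rw [muk_zero f p hp]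
        refine le_trans ?_ (Finset.single_le_sum (fun _ _ => zero_le) (Finset.mem_univ i))
        rw [Measure.dirac_apply_of_mem hmem, mul_one]
        refine ENNReal.ofReal_le_ofReal ?_
        calc rmin ^ (((q + 1 : ℕ) : ℝ) * s) ≤ rmin ^ s := by
              refine Real.rpow_le_rpow_of_exponent_ge hmin0 hmin1.le ?_
              push_cast
              nlinarith [Nat.cast_nonneg (α := ℝ) q]
          _ ≤ r i ^ s := Real.rpow_le_rpow hmin0.le (hrmin₂ i) hs.le
    | succ k ih =>
      rintro (_ | q) x hx
      · simpa using hq0 (k + 1) x hx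
      · obtain ⟨i, y, hy, rfl⟩ := mem_iUnion.1 hx
        rw [muk_succ f hf p r hr0 s k _ measurableSet_closedBall]
        refine le_trans ?_ (Finset.single_le_sum (fun _ _ => zero_le) (Finset.mem_univ i))
        have hsub : closedBall y (R * rmax ^ q) ⊆
            f i ⁻¹' closedBall (f i y) (R * rmax ^ (q + 1)) := by
          intro z hz
          rw [mem_preimage, mem_closedBall, hsim]
          calc r i * dist z y ≤ rmax * (R * rmax ^ q) :=
                mul_le_mul (hrmax₂ i) hz dist_nonneg hmax0.le
            _ = R * rmax ^ (q + 1) := by ring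
        have hsplit : rmin ^ (((q + 1 : ℕ) : ℝ) * s) = rmin ^ s * rmin ^ ((q : ℝ) * s) := by
          rw [← Real.rpow_add hmin0]
          push_cast
          ring_nf
        rw [hsplit, ENNReal.ofReal_mul (Real.rpow_nonneg hmin0.le _)]
        exact mul_le_mul'
          (ENNReal.ofReal_le_ofReal (Real.rpow_le_rpow hmin0.le (hrmin₂ i) hs.le))
          ((ih q y hy).trans (measure_mono hsub))
  intro k q _ x hx d
  exact ⟨fun hd => (key k q x hx).trans (measure_mono (closedBall_subset_ball hd)),
    fun hd => (key k q x hx).trans (measure_mono (closedBall_subset_closedBall hd))⟩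
end
end

section
/- (Lemma 3.1.) Let k ≥ 1 and let (x,d) ∈ 𝒜. Then there exist x' ∈ A_k and d' ≥ 0 such that: d' = dist(x', y) for some y ∈ A_k; there exists z ∈ A_k ∩ B̄(x',d') with i₁^z ≠ i₁^{x'}; and moreover (i) dist(x, x') ≤ R·r_max^k, (ii) d' ≤ d + 2R·r_max^k, (iii) μ(B̄(x,d)) ≤ μ_k(B̄(x',d')). -/
/-!
Put `q v = f_v(p_last)` for a word `v` of length `k + 1`; this is the point of the cloud in the
cylinder `f_v(E)` (the fixed points lie in `E` by `fixed_mem`), and the cylinder has diameter at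
most `δ = R * rmax ^ (k + 1)` by `dist_fword`. Let `w` be the word with `x ∈ f_w(E)` and take
`x' = q w`. If a cylinder `f_v(E)` meets the closed ball of centre `x` and radius `d`, then
`q v` is at distance at most `δ + d + δ` from `x'`. Hence, with `d'` the largest distance from `x'`
to a point `q v` not farther than `d + 2 * δ`, every such `q v` lies in the closed ball of centre
`x'` and radius `d'`.

Iterating the self-similarity of `μ` (`measure_eq_sum_words`) writes the measure of the ball as the
sum over words `v` of `r_v ^ s` times the `μ`-measure of the preimage of the ball under `f_v`. That
factor is at most `1`, and vanishes if `f_v(E)` misses the ball, so comparing with `μ_{k+1}`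
term by term gives the measure inequality. The point `z` is `q u` with `u` the word of a point of
the ball in a first-level piece other than that of `x`; by strong separation, `ι (q v)` is the first
letter of `v`.
-/

open MeasureTheory Metric Set

noncomputable section

section Words

variable {m : ℕ}

theorem fword_cons {X : Type*} (f : Fin m → X → X) {N : ℕ} (i : Fin m) (w : Fin N → Fin m) :
    fword f (List.ofFn (Fin.cons i w : Fin (N + 1) → Fin m)) = f i ∘ fword f (List.ofFn w) := by
  simp [List.ofFn_succ, fword]

theorem dist_fword {X : Type*} [PseudoMetricSpace X] {f : Fin m → X → X} {r : Fin m → ℝ}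
    (hsim : ∀ i x y, dist (f i x) (f i y) = r i * dist x y) :
    ∀ (N : ℕ) (w : Fin N → Fin m) (x y : X),
      dist (fword f (List.ofFn w) x) (fword f (List.ofFn w) y) = (∏ j, r (w j)) * dist x y := by
  intro N
  induction N with
  | zero => intro w x y; simp [fword]
  | succ N ih =>
    intro w x y
    obtain ⟨i, v, rfl⟩ : ∃ i v, w = Fin.cons i v := ⟨w 0, Fin.tail w, (Fin.cons_self_tail w).symm⟩
    rw [fword_cons, Fin.prod_univ_succ]
    simp [hsim, ih, mul_assoc]

theorem fword_mem {X : Type*} {f : Fin m → X → X} {E : Set X}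
    (hE : ∀ i, ∀ x ∈ E, f i x ∈ E) :
    ∀ (w : List (Fin m)), ∀ x ∈ E, fword f w x ∈ E := by
  intro w
  induction w with
  | nil => intro x hx; exact hx
  | cons i w ih => intro x hx; exact hE i _ (ih x hx)

theorem exists_word {X : Type*} {f : Fin m → X → X} {E : Set X}
    (hEinv : E = ⋃ i, f i '' E) :
    ∀ (N : ℕ), ∀ x ∈ E, ∃ w : Fin N → Fin m, x ∈ fword f (List.ofFn w) '' E := by
  intro N
  induction N with
  | zero => intro x hx; exact ⟨Fin.elim0, x, hx, by simp [fword]⟩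
  | succ N ih =>
    intro x hx
    rw [hEinv] at hx
    obtain ⟨i, y, hy, rfl⟩ := mem_iUnion.1 hx
    obtain ⟨w, e, he, rfl⟩ := ih y hy
    exact ⟨Fin.cons i w, e, he, by rw [fword_cons]; rfl⟩

/-- The first letter of an address of `x ∈ f i '' E` can be taken to be `i`. -/
theorem exists_word_head {X : Type*} {f : Fin m → X → X} {E : Set X}
    (hEinv : E = ⋃ i, f i '' E) (k : ℕ) (i : Fin m) {x : X} (hx : x ∈ f i '' E) :
    ∃ w : Fin (k + 1) → Fin m, w 0 = i ∧ x ∈ fword f (List.ofFn w) '' E := by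
  obtain ⟨y, hy, rfl⟩ := hx
  obtain ⟨w, e, he, rfl⟩ := exists_word hEinv k y hy
  exact ⟨Fin.cons i w, by simp, e, he, by rw [fword_cons]; rfl⟩

theorem fword_mem_head {X : Type*} {f : Fin m → X → X} {E : Set X}
    (hE : ∀ i, ∀ x ∈ E, f i x ∈ E) (k : ℕ) (w : Fin (k + 1) → Fin m) {x : X} (hx : x ∈ E) :
    fword f (List.ofFn w) x ∈ f (w 0) '' E := by
  rw [List.ofFn_succ]
  exact ⟨_, fword_mem hE _ x hx, rfl⟩

theorem fword_mem_cloud {X : Type*} {f : Fin m → X → X} {p : Fin m → X}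
    (hp : ∀ i, f i (p i) = p i) :
    ∀ (k : ℕ) (w : Fin (k + 1) → Fin m),
      fword f (List.ofFn w) (p (w (Fin.last k))) ∈ cloud f p k := by
  intro k
  induction k with
  | zero =>
    intro w
    refine ⟨w 0, ?_⟩
    simp [fword, hp]
  | succ k ih =>
    intro w
    obtain ⟨i, v, rfl⟩ : ∃ i v, w = Fin.cons i v := ⟨w 0, Fin.tail w, (Fin.cons_self_tail w).symm⟩
    rw [fword_cons]
    refine mem_iUnion.2 ⟨i, _, ih v, ?_⟩
    rw [← Fin.succ_last, Fin.cons_succ]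
    rfl

/-- The point of `E` nearest to the fixed point of a contraction preserving `E` is moved strictly
closer to it unless it is the fixed point itself. -/
theorem fixed_mem {X : Type*} [MetricSpace X] {g : X → X} {ρ : ℝ} (hρ : ρ < 1)
    (hg : ∀ x y, dist (g x) (g y) = ρ * dist x y) {E : Set X} (hEne : E.Nonempty)
    (hE : IsCompact E) (hgE : ∀ x ∈ E, g x ∈ E) {q : X} (hq : g q = q) : q ∈ E := by
  obtain ⟨e, he, hmin⟩ := hE.exists_isMinOn hEne (f := fun x => dist x q) (by fun_prop)
  have h1 : dist e q ≤ dist (g e) q := hmin (hgE e he)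
  have h2 : dist (g e) q = ρ * dist e q := by
    conv_lhs => rw [← hq]
    exact hg e q
  have h3 : dist e q = 0 := by nlinarith [dist_nonneg (x := e) (y := q)]
  rwa [← dist_eq_zero.1 h3]

/-- Self-similarity of `μ`, iterated `N` times. -/
theorem measure_eq_sum_words {X : Type*} [MeasurableSpace X] {f : Fin m → X → X} {r : Fin m → ℝ}
    (hr : ∀ i, 0 ≤ r i) (hf : ∀ i, Measurable (f i)) {s : ℝ} {μ : Measure X}
    (hμself : ∀ A : Set X, MeasurableSet A →
      μ A = ∑ i, ENNReal.ofReal (r i ^ s) * μ (f i ⁻¹' A)) :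
    ∀ (N : ℕ) (A : Set X), MeasurableSet A →
      μ A = ∑ w : Fin N → Fin m,
        ENNReal.ofReal ((∏ j, r (w j)) ^ s) * μ (fword f (List.ofFn w) ⁻¹' A) := by
  intro N
  induction N with
  | zero => intro A hA; simp [fword]
  | succ N ih =>
    intro A hA
    rw [hμself A hA, ← (Fin.consEquiv (fun _ : Fin (N + 1) => Fin m)).sum_comp,
      Fintype.sum_prod_type]
    refine Finset.sum_congr rfl fun i _ => ?_
    rw [ih _ (hf i hA), Finset.mul_sum]
    refine Finset.sum_congr rfl fun w _ => ?_
    change _ = ENNReal.ofReal ((∏ j, r ((Fin.cons i w : Fin (N + 1) → Fin m) j)) ^ s) *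
      μ (fword f (List.ofFn (Fin.cons i w : Fin (N + 1) → Fin m)) ⁻¹' A)
    rw [fword_cons, Fin.prod_univ_succ, preimage_comp, ← mul_assoc]
    simp only [Fin.cons_zero, Fin.cons_succ]
    rw [Real.mul_rpow (hr i) (Finset.prod_nonneg fun j _ => hr _),
      ENNReal.ofReal_mul (Real.rpow_nonneg (hr i) s)]

end Words

theorem stmt10
    (n m : ℕ) (hn : 1 ≤ n) (hm : 2 ≤ m)
    (f : Fin m → EuclideanSpace ℝ (Fin n) → EuclideanSpace ℝ (Fin n))
    (r : Fin m → ℝ) (hr : ∀ i, r i ∈ Set.Ioo (0 : ℝ) 1)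
    (hsim : ∀ i x y, dist (f i x) (f i y) = r i * dist x y)
    (E : Set (EuclideanSpace ℝ (Fin n)))
    (hEne : E.Nonempty) (hEcpt : IsCompact E)
    (hEinv : E = ⋃ i, f i '' E)
    (hssc : ∀ i j, i ≠ j → f i '' E ∩ f j '' E = ∅)
    (s : ℝ) (hs : 0 < s) (hsum : ∑ i, r i ^ s = 1)
    (μ : Measure (EuclideanSpace ℝ (Fin n)))
    (hμprob : IsProbabilityMeasure μ) (hμE : μ E = 1)
    (hμself : ∀ A : Set (EuclideanSpace ℝ (Fin n)), MeasurableSet A →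
      μ A = ∑ i, ENNReal.ofReal (r i ^ s) * μ (f i ⁻¹' A))
    (p : Fin m → EuclideanSpace ℝ (Fin n)) (hp : ∀ i, f i (p i) = p i)
    (rmin rmax : ℝ)
    (hrmin₁ : ∃ i, rmin = r i) (hrmin₂ : ∀ i, rmin ≤ r i)
    (hrmax₁ : ∃ i, rmax = r i) (hrmax₂ : ∀ i, r i ≤ rmax)
    (c R : ℝ) (hcpos : 0 < c)
    (hc : c = sInf {d : ℝ | ∃ i j, i ≠ j ∧ ∃ x ∈ f i '' E, ∃ y ∈ f j '' E, d = dist x y})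
    (hR : R = Metric.diam E)
    (ι : EuclideanSpace ℝ (Fin n) → Fin m)
    (hι : ∀ x ∈ E, x ∈ f (ι x) '' E) :
    ∀ k : ℕ, ∀ x ∈ E, ∀ d : ℝ, c ≤ d → d ≤ R →
      (∃ j, j ≠ ι x ∧ (Metric.closedBall x d ∩ f j '' E).Nonempty) →
      ∃ x' ∈ cloud f p k, ∃ d' : ℝ, 0 ≤ d' ∧
        (∃ y ∈ cloud f p k, d' = dist x' y) ∧
        (∃ z ∈ cloud f p k ∩ Metric.closedBall x' d', ι z ≠ ι x') ∧
        dist x x' ≤ R * rmax ^ (k + 1) ∧ d' ≤ d + 2 * R * rmax ^ (k + 1) ∧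
        μ (Metric.closedBall x d) ≤ muk f p r s k (Metric.closedBall x' d') := by
  intro k x hx d hcd _ hj
  obtain ⟨j, hjx, y, hyB, hyj⟩ := hj
  have hE : ∀ i, ∀ x ∈ E, f i x ∈ E := fun i x hx => by
    rw [hEinv]; exact mem_iUnion.2 ⟨i, x, hx, rfl⟩
  have hpE : ∀ i, p i ∈ E := fun i =>
    fixed_mem (hr i).2 (hsim i) hEne hEcpt (hE i) (hp i)
  have hι' : ∀ i, ∀ x ∈ f i '' E, ι x = i := by
    intro i x hx
    by_contra h
    have hxE : x ∈ E := by rw [hEinv]; exact mem_iUnion.2 ⟨i, hx⟩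
    exact (hssc _ _ h).le ⟨hι x hxE, hx⟩
  have hf : ∀ i, Measurable (f i) := fun i =>
    (LipschitzWith.of_dist_le' (K := r i) fun x y => (hsim i x y).le).continuous.measurable
  -- `q v` is the marked point of the cylinder of `v`, and `δ` bounds the diameters of cylinders.
  set q : (Fin (k + 1) → Fin m) → EuclideanSpace ℝ (Fin n) :=
    fun v => fword f (List.ofFn v) (p (v (Fin.last k))) with hq
  set δ := R * rmax ^ (k + 1) with hδ
  have hδ0 : ∀ v, ∀ e ∈ fword f (List.ofFn v) '' E, dist e (q v) ≤ δ := by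
    rintro v _ ⟨e, he, rfl⟩
    have h1 : dist e (p (v (Fin.last k))) ≤ R := by
      rw [hR]; exact dist_le_diam_of_mem hEcpt.isBounded he (hpE _)
    have h2 : ∏ j, r (v j) ≤ rmax ^ (k + 1) := by
      have := Finset.prod_le_prod (s := Finset.univ) (f := fun j => r (v j)) (g := fun _ => rmax)
        (fun j _ => (hr _).1.le) (fun j _ => hrmax₂ _)
      simpa using this
    rw [hq, dist_fword hsim, hδ, mul_comm R]
    exact mul_le_mul h2 h1 dist_nonneg
      (le_trans (Finset.prod_nonneg fun j _ => (hr _).1.le) h2)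
  obtain ⟨w, hw0, hxw⟩ := exists_word_head hEinv k (ι x) (hι x hx)
  obtain ⟨u, hu0, hyu⟩ := exists_word_head hEinv k j hyj
  have hxx' : dist x (q w) ≤ δ := hδ0 w x hxw
  have hcyl : ∀ v, ∀ e ∈ fword f (List.ofFn v) '' E, e ∈ closedBall x d →
      dist (q w) (q v) ≤ d + 2 * δ := by
    intro v e he heB
    have h1 := hδ0 v e he
    have h2 := mem_closedBall.1 heB
    have h3 := dist_triangle4 (q w) x e (q v)
    rw [dist_comm (q w) x, dist_comm x e] at h3
    linarith
  -- `d'` is the largest distance from `q w` to a marked point at distance at most `d + 2δ`.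
  obtain ⟨v₀, hv₀, hmax⟩ :=
    (Finset.univ.filter fun v => dist (q w) (q v) ≤ d + 2 * δ).exists_max_image
      (fun v => dist (q w) (q v)) ⟨u, by simpa using hcyl u y hyu hyB⟩
  have hmax' : ∀ v, dist (q w) (q v) ≤ d + 2 * δ → q v ∈ closedBall (q w) (dist (q w) (q v₀)) := by
    intro v hv
    rw [mem_closedBall, dist_comm]
    exact hmax v (by simpa using hv)
  have hιq : ∀ v, ι (q v) = v 0 := fun v => hι' _ _ (fword_mem_head hE k v (hpE _))
  refine ⟨q w, fword_mem_cloud hp k w, dist (q w) (q v₀), dist_nonneg,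
    ⟨q v₀, fword_mem_cloud hp k v₀, rfl⟩,
    ⟨q u, ⟨fword_mem_cloud hp k u, hmax' u (hcyl u y hyu hyB)⟩, ?_⟩, hxx', ?_, ?_⟩
  · rw [hιq, hιq, hu0, hw0]
    exact hjx
  · have : dist (q w) (q v₀) ≤ d + 2 * δ := by simpa using hv₀
    linarith
  · rw [measure_eq_sum_words (fun i => (hr i).1.le) hf hμself (k + 1) _ measurableSet_closedBall,
      muk, Measure.finsetSum_apply]
    refine Finset.sum_le_sum fun v _ => ?_
    rw [Measure.smul_apply, smul_eq_mul]
    refine mul_le_mul_right ?_ _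
    by_cases h : ∃ e ∈ fword f (List.ofFn v) '' E, e ∈ closedBall x d
    · obtain ⟨e, he, heB⟩ := h
      rw [Measure.dirac_apply_of_mem (hmax' v (hcyl v e he heB))]
      exact prob_le_one
    -- Otherwise the preimage of the ball misses `E`, which has full measure.
    · have h0 : μ Eᶜ = 0 := (prob_compl_eq_zero_iff hEcpt.measurableSet).2 hμE
      refine (measure_mono_null ?_ h0).trans_le zero_le
      intro e he heE
      exact h ⟨_, ⟨e, heE, rfl⟩, he⟩
end
end
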